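/- Let 4 ≤ p < q, n = p + q, and suppose 2p ≤ q + 4. Every tree T ∈ 𝒯_n^{p,q} that is isomorphic to none of B_{p,q}^{0,0}, B_{p,q}^{0,1}, B_{p,q}^{2,0} satisfies T ≺_s B_{p,q}^{2,0}; that is, in this case B_{p,q}^{2,0} is the unique third last tree in the S-order among 𝒯_n^{p,q}. -/

import Mathlib

open SimpleGraph

open scoped Classical in
/-- The adjacency matrix of a simple graph, with real entries. -/
noncomputable def adjMat {V : Type*} [Fintype V] (G : SimpleGraph V) : Matrix V V ℝ :=
  Matrix.of fun a b => if G.Adj a b then 1 else 0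

/-- The `k`-th spectral moment `S_k(G) = tr(A(G)^k)`. -/
noncomputable def spectralMoment {V : Type*} [Fintype V] [DecidableEq V]
    (G : SimpleGraph V) (k : ℕ) : ℝ :=
  Matrix.trace (adjMat G ^ k)

/-- `SLt G₁ G₂` means `G₁ ≺_s G₂`: for some `k` with `1 ≤ k ≤ n - 1`,
`S_i(G₁) = S_i(G₂)` for all `i < k` and `S_k(G₁) < S_k(G₂)`. -/
def SLt {V : Type*} [Fintype V] [DecidableEq V] (G₁ G₂ : SimpleGraph V) : Prop :=
  ∃ k : ℕ, 1 ≤ k ∧ k ≤ Fintype.card V - 1 ∧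
    (∀ i < k, spectralMoment G₁ i = spectralMoment G₂ i) ∧
    spectralMoment G₁ k < spectralMoment G₂ k

/-- The tree `B_{p,q}^{k,l}` on `p + q` vertices: vertex `0 = u` is adjacent to `1 = v`
and to the `q - 1` vertices `2, …, q`; the distinguished neighbor `2` of `u` carries the
`k` pendant leaves `q+1, …, q+k`; the `l` neighbors `3, …, l+2` of `u` carry one pendant
leaf each (`q+k+j` is attached to `j+2` for `1 ≤ j ≤ l`); and `v` carries the
`p - k - l - 1` pendant leaves `q+k+l+1, …, p+q-1`. -/
def BTree (p q k l : ℕ) : SimpleGraph (Fin (p + q)) :=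
  SimpleGraph.fromRel (fun a b =>
    (a.val = 0 ∧ b.val = 1) ∨
    (a.val = 0 ∧ 2 ≤ b.val ∧ b.val ≤ q) ∨
    (a.val = 2 ∧ q + 1 ≤ b.val ∧ b.val ≤ q + k) ∨
    (q + k + 1 ≤ b.val ∧ b.val ≤ q + k + l ∧ a.val = b.val - (q + k) + 2) ∨
    (a.val = 1 ∧ q + k + l + 1 ≤ b.val))

/-- The tree `D_{p,q}^{k,l}` on `p + q` vertices: vertex `1 = v` is adjacent to `0 = u`
and to the `p - 1` vertices `2, …, p`; the distinguished neighbor `2` of `v` carries the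
`k` pendant leaves `p+1, …, p+k`; the `l` neighbors `3, …, l+2` of `v` carry one pendant
leaf each; and `u` carries the `q - k - l - 1` pendant leaves `p+k+l+1, …, p+q-1`. -/
def DTree (p q k l : ℕ) : SimpleGraph (Fin (p + q)) :=
  SimpleGraph.fromRel (fun a b =>
    (a.val = 0 ∧ b.val = 1) ∨
    (a.val = 1 ∧ 2 ≤ b.val ∧ b.val ≤ p) ∨
    (a.val = 2 ∧ p + 1 ≤ b.val ∧ b.val ≤ p + k) ∨
    (p + k + 1 ≤ b.val ∧ b.val ≤ p + k + l ∧ a.val = b.val - (p + k) + 2) ∨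
    (a.val = 0 ∧ p + k + l + 1 ≤ b.val))

/-- `T ∈ 𝒯_{p+q}^{p,q}`: `T` is a tree on `p + q` vertices with a `(p,q)`-bipartition. -/
def TreeBip (p q : ℕ) (G : SimpleGraph (Fin (p + q))) : Prop :=
  G.IsTree ∧ ∃ A : Finset (Fin (p + q)), A.card = p ∧
    ∀ ⦃x y : Fin (p + q)⦄, G.Adj x y → (x ∈ A ↔ y ∉ A)

/-!
For a tree `G` on `n` vertices, `S₄(G) = 2 ∑ (d(v) - 1)² + 4n - 6`, while `S₀, S₁, S₂, S₃, S₅`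
depend only on `n`. So the S-order first compares the sums of squares of the excess degrees
`d(v) - 1`; these add up to `q - 1` over the part of size `p`, and to `p - 1` over the part of
size `q`.

If some vertex of the part of size `p` is adjacent to the whole other part, then the excesses over
that other part determine the tree up to isomorphism. The trees with excesses `(p - 1, 0, …)`,
`(p - 2, 1, 0, …)` and `(p - 3, 2, 0, …)` are `B^{0,0}`, `B^{0,1}` and `B^{2,0}`, and every other
distribution of the excess has a smaller sum of squares. If there is no such vertex, all excesses in
the part of size `p` are at most `q - 2`, and `2p ≤ q + 4` makes the sum of squares at most that of
`B^{2,0}`. A tie forces `2p = q + 4` and a vertex adjacent to the whole part of size `p`; for a tree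
with such a vertex `S₆` is an explicit sum over one part, and it settles the tie.
-/

section ClosedWalks

variable {V : Type*} [Fintype V] {G : SimpleGraph V}

theorem sum_sum_neighborFinset [DecidableRel G.Adj] (f : V → ℝ) :
    ∑ x, ∑ y ∈ G.neighborFinset x, f y = ∑ y, G.degree y * f y := by
  simp only [neighborFinset_eq_filter, Finset.sum_filter]
  rw [Finset.sum_comm]
  refine Finset.sum_congr rfl fun y _ => ?_
  simp only [G.adj_comm _ y]
  rw [← Finset.sum_filter, ← neighborFinset_eq_filter, Finset.sum_const,
    card_neighborFinset_eq_degree, nsmul_eq_mul]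

theorem sum_adjMatrix_apply [DecidableRel G.Adj] (x : V) : ∑ y, G.adjMatrix ℝ x y = G.degree x := by
  simp [adjMatrix_apply, ← neighborFinset_eq_filter]

variable [DecidableEq V]

theorem spectralMoment_eq_trace [DecidableRel G.Adj] (k : ℕ) :
    spectralMoment G k = (G.adjMatrix ℝ ^ k).trace := by
  have h : adjMat G = G.adjMatrix ℝ := by
    ext x y
    simp only [adjMat, Matrix.of_apply, adjMatrix_apply]
    congr
  rw [spectralMoment, h]

theorem spectralMoment_zero : spectralMoment G 0 = Fintype.card V := by
  classical
  rw [spectralMoment_eq_trace, pow_zero, Matrix.trace_one]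

theorem spectralMoment_eq_zero_of_odd (hG : G.IsBipartite) {k : ℕ} (hk : Odd k) :
    spectralMoment G k = 0 := by
  classical
  rw [spectralMoment_eq_trace]
  refine Finset.sum_eq_zero fun x _ => ?_
  rw [Matrix.diag_apply, adjMatrix_pow_apply_eq_card_walk, Nat.cast_eq_zero,
    Fintype.card_eq_zero_iff]
  refine ⟨fun ⟨w, hw⟩ => Nat.not_even_iff_odd.mpr hk ?_⟩
  rw [← hw]
  exact two_colorable_iff_forall_loop_even.mp hG x w

variable [DecidableRel G.Adj]

theorem spectralMoment_two : spectralMoment G 2 = ∑ v, (G.degree v : ℝ) := by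
  rw [spectralMoment_eq_trace, sq]
  exact Finset.sum_congr rfl fun v _ => G.adjMatrix_mul_self_apply_self v

theorem spectralMoment_two_mul (k : ℕ) :
    spectralMoment G (2 * k) = ∑ x, ∑ y, (G.adjMatrix ℝ ^ k) x y ^ 2 := by
  rw [spectralMoment_eq_trace, two_mul, pow_add]
  refine Finset.sum_congr rfl fun x _ => ?_
  rw [Matrix.diag_apply, Matrix.mul_apply]
  refine Finset.sum_congr rfl fun y _ => ?_
  rw [(G.isSymm_adjMatrix.pow k).apply, sq]

theorem sum_sum_adjMatrix_pow_succ (k : ℕ) :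
    ∑ x, ∑ y, (G.adjMatrix ℝ ^ (k + 1)) x y
      = ∑ x, G.degree x * ∑ y, (G.adjMatrix ℝ ^ k) x y := by
  rw [← sum_sum_neighborFinset]
  refine Finset.sum_congr rfl fun x _ => ?_
  simp only [pow_succ', adjMatrix_mul_apply]
  exact Finset.sum_comm

theorem adjMatrix_sq_apply_self (x : V) : (G.adjMatrix ℝ ^ 2) x x = G.degree x := by
  rw [sq, adjMatrix_mul_self_apply_self]

end ClosedWalks

section Forests

variable {V : Type*} [Fintype V] [DecidableEq V] {G : SimpleGraph V} [DecidableRel G.Adj]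

theorem adjMatrix_pow_apply_eq_zero_or_one_of_forall_isPath (hG : G.IsAcyclic) {k : ℕ} {x y : V}
    (hpath : ∀ w : G.Walk x y, w.length = k → w.IsPath) :
    (G.adjMatrix ℝ ^ k) x y = 0 ∨ (G.adjMatrix ℝ ^ k) x y = 1 := by
  have hle : Fintype.card {w : G.Walk x y | w.length = k} ≤ 1 := by
    rw [Fintype.card_le_one_iff]
    rintro ⟨w, hw⟩ ⟨w', hw'⟩
    have h := (hG.subsingleton_path x y).elim ⟨w, hpath w hw⟩ ⟨w', hpath w' hw'⟩
    simpa only [Subtype.mk.injEq] using h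
  rw [adjMatrix_pow_apply_eq_card_walk]
  exact_mod_cast Nat.le_one_iff_eq_zero_or_eq_one.mp hle

theorem adjMatrix_sq_apply_eq_zero_or_one (hG : G.IsAcyclic) {x y : V} (hxy : x ≠ y) :
    (G.adjMatrix ℝ ^ 2) x y = 0 ∨ (G.adjMatrix ℝ ^ 2) x y = 1 := by
  refine adjMatrix_pow_apply_eq_zero_or_one_of_forall_isPath hG fun w hw => ?_
  match w, hw with
  | .cons hxa (.cons _ .nil), _ => simp [hG.isPath_iff_isChain, hxy, hxa.ne]

theorem adjMatrix_cube_apply_eq_zero_or_one (hG : G.IsAcyclic) {x y : V} (hxy : ¬ G.Adj x y) :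
    (G.adjMatrix ℝ ^ 3) x y = 0 ∨ (G.adjMatrix ℝ ^ 3) x y = 1 := by
  refine adjMatrix_pow_apply_eq_zero_or_one_of_forall_isPath hG fun w hw => ?_
  match w, hw with
  | .cons (v := a) hxa (.cons (v := b) hab (.cons hby .nil)), _ =>
    have hxb : x ≠ b := by rintro rfl; exact hxy hby
    have hay : a ≠ y := by rintro rfl; exact hxy hxa
    simp [hG.isPath_iff_isChain, hxb, hay, hab.ne]

theorem adjMatrix_sq_apply_of_common_neighbor (hG : G.IsAcyclic) {x y z : V} (hxy : x ≠ y)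
    (hxz : G.Adj x z) (hzy : G.Adj z y) : (G.adjMatrix ℝ ^ 2) x y = 1 := by
  refine (adjMatrix_sq_apply_eq_zero_or_one hG hxy).resolve_left ?_
  rw [adjMatrix_pow_apply_eq_card_walk, Nat.cast_eq_zero, Fintype.card_eq_zero_iff,
    not_isEmpty_iff]
  exact ⟨.cons hxz (.cons hzy .nil), rfl⟩

theorem adjMatrix_cube_apply_of_adj (hG : G.IsAcyclic) {x y : V} (hxy : G.Adj x y) :
    (G.adjMatrix ℝ ^ 3) x y = G.degree x + G.degree y - 1 := by
  have hx : x ∈ G.neighborFinset y := by simpa using hxy.symm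
  have hother : ∀ z ∈ (G.neighborFinset y).erase x, (G.adjMatrix ℝ ^ 2) x z = 1 := by
    intro z hz
    rw [Finset.mem_erase, mem_neighborFinset] at hz
    exact adjMatrix_sq_apply_of_common_neighbor hG hz.1.symm hxy hz.2
  rw [pow_succ, mul_adjMatrix_apply, ← Finset.add_sum_erase _ _ hx, Finset.sum_congr rfl hother,
    adjMatrix_sq_apply_self, Finset.sum_const, Finset.card_erase_of_mem hx,
    card_neighborFinset_eq_degree, nsmul_one, Nat.cast_pred hxy.degree_pos_right]
  ring

theorem spectralMoment_four_of_isAcyclic (hG : G.IsAcyclic) :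
    spectralMoment G 4 = ∑ x, (2 * (G.degree x : ℝ) ^ 2 - G.degree x) := by
  have hrow (x : V) : ∑ y, (G.adjMatrix ℝ ^ 2) x y ^ 2
      = ∑ y, (G.adjMatrix ℝ ^ 2) x y + ((G.degree x : ℝ) ^ 2 - G.degree x) := by
    have hx := Finset.mem_univ x
    have hother : ∀ y ∈ Finset.univ.erase x,
        (G.adjMatrix ℝ ^ 2) x y ^ 2 = (G.adjMatrix ℝ ^ 2) x y := fun y hy => by
      rcases adjMatrix_sq_apply_eq_zero_or_one hG (Finset.ne_of_mem_erase hy).symm with h | h <;>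
        simp [h]
    rw [← Finset.add_sum_erase _ _ hx, ← Finset.add_sum_erase _ _ hx,
      Finset.sum_congr rfl hother, adjMatrix_sq_apply_self]
    ring
  have htotal : ∑ x, ∑ y, (G.adjMatrix ℝ ^ 2) x y = ∑ x, (G.degree x : ℝ) ^ 2 := by
    rw [sum_sum_adjMatrix_pow_succ]
    simp only [pow_one, sum_adjMatrix_apply, sq]
  rw [spectralMoment_two_mul 2, Finset.sum_congr rfl fun x _ => hrow x, Finset.sum_add_distrib,
    htotal, ← Finset.sum_add_distrib]
  exact Finset.sum_congr rfl fun x _ => by ring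

theorem spectralMoment_six_of_isAcyclic (hG : G.IsAcyclic) :
    spectralMoment G 6 = ∑ x, ∑ y ∈ G.neighborFinset x,
      (((G.degree x : ℝ) + G.degree y - 1) ^ 2 + (G.degree x - 1) * (G.degree y - 1)) := by
  have hrow (x : V) : ∑ y, (G.adjMatrix ℝ ^ 3) x y ^ 2 = ∑ y, (G.adjMatrix ℝ ^ 3) x y
      + ∑ y ∈ G.neighborFinset x,
        (((G.degree x : ℝ) + G.degree y - 1) ^ 2 - (G.degree x + G.degree y - 1)) := by
    rw [neighborFinset_eq_filter, Finset.sum_filter, ← Finset.sum_add_distrib]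
    refine Finset.sum_congr rfl fun y _ => ?_
    split_ifs with hxy
    · rw [adjMatrix_cube_apply_of_adj hG hxy]
      ring
    · rcases adjMatrix_cube_apply_eq_zero_or_one hG hxy with h | h <;> simp [h]
  have htotal : ∑ x, ∑ y, (G.adjMatrix ℝ ^ 3) x y
      = ∑ x, ∑ y ∈ G.neighborFinset x, (G.degree x : ℝ) * G.degree y := by
    rw [sum_sum_adjMatrix_pow_succ]
    refine Finset.sum_congr rfl fun x _ => ?_
    rw [← Finset.mul_sum, sq]
    simp only [adjMatrix_mul_apply]
    simp only [Finset.sum_comm (γ := V), sum_adjMatrix_apply]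
  rw [spectralMoment_two_mul 3, Finset.sum_congr rfl fun x _ => hrow x, Finset.sum_add_distrib,
    htotal, ← Finset.sum_add_distrib]
  simp only [← Finset.sum_add_distrib]
  refine Finset.sum_congr rfl fun x _ => Finset.sum_congr rfl fun y _ => ?_
  ring

end Forests

/-- The excess `d(v) - 1` of the degree of a vertex over that of a leaf. In a tree with at least two
vertices the truncated subtraction is exact. -/
def excessDegree {V : Type*} (G : SimpleGraph V) (v : V) [Fintype (G.neighborSet v)] : ℕ :=
  G.degree v - 1

section Trees

variable {V : Type*} [Fintype V] {G : SimpleGraph V}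

theorem degree_eq_excessDegree_add_one [Nontrivial V] [DecidableRel G.Adj] (hG : G.IsTree) (v : V) :
    G.degree v = excessDegree G v + 1 :=
  (Nat.sub_add_cancel (hG.preconnected.degree_pos_of_nontrivial v)).symm

theorem sum_degree_add_two [DecidableRel G.Adj] (hG : G.IsTree) :
    ∑ v, G.degree v + 2 = 2 * Fintype.card V := by
  classical
  rw [sum_degrees_eq_twice_card_edges, ← hG.card_edgeFinset]
  ring

theorem sum_excessDegree_add_two [Nontrivial V] [DecidableRel G.Adj] (hG : G.IsTree) :
    ∑ v, excessDegree G v + 2 = Fintype.card V := by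
  have h := sum_degree_add_two hG
  simp only [degree_eq_excessDegree_add_one hG, Finset.sum_add_distrib, Finset.sum_const,
    Finset.card_univ, smul_eq_mul] at h
  omega

variable [DecidableEq V]

theorem spectralMoment_two_of_isTree (hG : G.IsTree) :
    spectralMoment G 2 = 2 * Fintype.card V - 2 := by
  classical
  rw [spectralMoment_two, eq_sub_iff_add_eq]
  exact_mod_cast sum_degree_add_two hG

theorem spectralMoment_four_of_isTree [Nontrivial V] [DecidableRel G.Adj] (hG : G.IsTree) :
    spectralMoment G 4 = 2 * ∑ v, (excessDegree G v : ℝ) ^ 2 + 4 * Fintype.card V - 6 := by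
  have hsum : ∑ v, (excessDegree G v : ℝ) + 2 = Fintype.card V := by
    exact_mod_cast sum_excessDegree_add_two hG
  have hterm (v : V) : 2 * (G.degree v : ℝ) ^ 2 - G.degree v
      = 2 * (excessDegree G v : ℝ) ^ 2 + 3 * excessDegree G v + 1 := by
    rw [degree_eq_excessDegree_add_one hG v]
    push_cast
    ring
  simp only [spectralMoment_four_of_isAcyclic hG.isAcyclic, hterm, Finset.sum_add_distrib,
    ← Finset.mul_sum, Finset.sum_const, Finset.card_univ, nsmul_one]
  linarith

variable {H : SimpleGraph V}

theorem spectralMoment_eq_of_lt_six (hG : G.IsTree) (hH : H.IsTree) {i : ℕ} (hi : i < 6)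
    (hi4 : i ≠ 4) : spectralMoment G i = spectralMoment H i := by
  have hodd {j : ℕ} (hj : Odd j) : spectralMoment G j = spectralMoment H j := by
    rw [spectralMoment_eq_zero_of_odd hG.isBipartite hj,
      spectralMoment_eq_zero_of_odd hH.isBipartite hj]
  interval_cases i
  · rw [spectralMoment_zero, spectralMoment_zero]
  · exact hodd (by decide)
  · rw [spectralMoment_two_of_isTree hG, spectralMoment_two_of_isTree hH]
  · exact hodd (by decide)
  · exact absurd rfl hi4
  · exact hodd (by decide)

variable [DecidableRel G.Adj] [DecidableRel H.Adj]

theorem sLt_of_sum_sq_excessDegree_lt (hG : G.IsTree) (hH : H.IsTree) (hV : 5 ≤ Fintype.card V)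
    (hlt : ∑ v, excessDegree G v ^ 2 < ∑ v, excessDegree H v ^ 2) : SLt G H := by
  have : Nontrivial V := Fintype.one_lt_card_iff_nontrivial.mp (by omega)
  refine ⟨4, by norm_num, by omega, fun i hi => ?_, ?_⟩
  · exact spectralMoment_eq_of_lt_six hG hH (by omega) hi.ne
  · have hlt' : ∑ v, (excessDegree G v : ℝ) ^ 2 < ∑ v, (excessDegree H v : ℝ) ^ 2 := by
      exact_mod_cast hlt
    rw [spectralMoment_four_of_isTree hG, spectralMoment_four_of_isTree hH]
    linarith

theorem sLt_of_spectralMoment_six_lt (hG : G.IsTree) (hH : H.IsTree) (hV : 7 ≤ Fintype.card V)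
    (heq : ∑ v, excessDegree G v ^ 2 = ∑ v, excessDegree H v ^ 2)
    (hlt : spectralMoment G 6 < spectralMoment H 6) : SLt G H := by
  have : Nontrivial V := Fintype.one_lt_card_iff_nontrivial.mp (by omega)
  refine ⟨6, by norm_num, by omega, fun i hi => ?_, hlt⟩
  rcases eq_or_ne i 4 with rfl | hi4
  · have heq' : ∑ v, (excessDegree G v : ℝ) ^ 2 = ∑ v, (excessDegree H v : ℝ) ^ 2 := by
      exact_mod_cast heq
    rw [spectralMoment_four_of_isTree hG, spectralMoment_four_of_isTree hH, heq']
  · exact spectralMoment_eq_of_lt_six hG hH hi hi4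

end Trees

section BipartiteTrees

theorem mem_or_mem_of_isBipartiteWith {V : Type*} [Nontrivial V] {G : SimpleGraph V}
    {s t : Finset V} (hG : G.IsTree)
    (hst : G.IsBipartiteWith (s : Set V) (t : Set V)) (v : V) : v ∈ s ∨ v ∈ t := by
  have hv : v ∈ G.support := by rw [hG.preconnected.support_eq_univ]; trivial
  exact isBipartiteWith_support_subset hst hv

variable {V : Type*} [Fintype V] {G : SimpleGraph V} [DecidableRel G.Adj] {s t : Finset V} {h : V}

theorem neighborFinset_eq_of_degree_eq_card (hst : G.IsBipartiteWith (s : Set V) (t : Set V))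
    (hht : h ∈ t) (hdeg : G.degree h = s.card) : G.neighborFinset h = s :=
  Finset.eq_of_subset_of_card_le (isBipartiteWith_neighborFinset_subset' hst hht)
    (by rw [card_neighborFinset_eq_degree, hdeg])

theorem adj_iff_mem_of_degree_eq_card (hst : G.IsBipartiteWith (s : Set V) (t : Set V))
    (hht : h ∈ t) (hdeg : G.degree h = s.card) {v : V} : G.Adj h v ↔ v ∈ s := by
  rw [← mem_neighborFinset, neighborFinset_eq_of_degree_eq_card hst hht hdeg]

variable [Nontrivial V]

theorem sum_add_sum_of_isBipartiteWith {G : SimpleGraph V} (hG : G.IsTree)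
    (hst : G.IsBipartiteWith (s : Set V) (t : Set V)) {M : Type*} [AddCommMonoid M] (f : V → M) :
    ∑ v ∈ s, f v + ∑ v ∈ t, f v = ∑ v, f v := by
  classical
  rw [← Finset.sum_union (Finset.disjoint_coe.mp hst.disjoint)]
  congr 1
  exact Finset.eq_univ_of_forall fun v =>
    Finset.mem_union.mpr (mem_or_mem_of_isBipartiteWith hG hst v)

theorem sum_excessDegree_add_one (hG : G.IsTree)
    (hst : G.IsBipartiteWith (s : Set V) (t : Set V)) :
    ∑ v ∈ s, excessDegree G v + 1 = t.card := by
  have hcard := sum_add_sum_of_isBipartiteWith hG hst fun _ => 1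
  have hedges := isBipartiteWith_sum_degrees_eq_card_edges hst
  have htree := hG.card_edgeFinset
  simp only [degree_eq_excessDegree_add_one hG, Finset.sum_add_distrib] at hedges
  simp only [Finset.sum_const, smul_eq_mul, mul_one, Finset.card_univ] at hcard hedges
  omega

theorem excessDegree_eq_sum_of_degree_eq_card (hG : G.IsTree)
    (hst : G.IsBipartiteWith (s : Set V) (t : Set V)) (hdeg : G.degree h = s.card) :
    excessDegree G h = ∑ v ∈ t, excessDegree G v := by
  have hsum := sum_excessDegree_add_one hG hst.symm
  have hh := degree_eq_excessDegree_add_one hG h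
  omega

theorem excessDegree_eq_zero_of_degree_eq_card (hG : G.IsTree)
    (hst : G.IsBipartiteWith (s : Set V) (t : Set V)) (hht : h ∈ t) (hdeg : G.degree h = s.card)
    {v : V} (hv : v ∈ t) (hvh : v ≠ h) : excessDegree G v = 0 := by
  classical
  have hsum := Finset.add_sum_erase t (fun v => excessDegree G v) hht
  have hle := Finset.single_le_sum (f := fun v => excessDegree G v) (fun _ _ => Nat.zero_le _)
    (Finset.mem_erase.mpr ⟨hvh, hv⟩)
  have hh := excessDegree_eq_sum_of_degree_eq_card hG hst hdeg
  omega

theorem sum_sq_excessDegree_of_degree_eq_card (hG : G.IsTree)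
    (hst : G.IsBipartiteWith (s : Set V) (t : Set V)) (hht : h ∈ t) (hdeg : G.degree h = s.card) :
    ∑ v ∈ t, excessDegree G v ^ 2 = (s.card - 1) ^ 2 := by
  rw [Finset.sum_eq_single_of_mem h hht fun v hv hvh => ?_, excessDegree, hdeg]
  rw [excessDegree_eq_zero_of_degree_eq_card hG hst hht hdeg hv hvh, zero_pow two_ne_zero]

theorem sum_sum_neighborFinset_of_isBipartiteWith
    (hG : G.IsTree) (hst : G.IsBipartiteWith (s : Set V) (t : Set V)) {F : V → V → ℝ}
    (hF : ∀ x y, F x y = F y x) :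
    ∑ x, ∑ y ∈ G.neighborFinset x, F x y = 2 * ∑ x ∈ s, ∑ y ∈ G.neighborFinset x, F x y := by
  have hswap : ∑ x ∈ t, ∑ y ∈ G.neighborFinset x, F x y
      = ∑ x ∈ s, ∑ y ∈ G.neighborFinset x, F x y := by
    rw [Finset.sum_comm' (s' := fun y => G.neighborFinset y) (t' := s)]
    · simp only [hF]
    · simp only [mem_neighborFinset]
      exact fun x y => ⟨fun hxy => ⟨hxy.2.symm, hst.symm.mem_of_mem_adj hxy.1 hxy.2⟩,
        fun hxy => ⟨hst.mem_of_mem_adj hxy.2 hxy.1, hxy.1.symm⟩⟩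
  rw [← sum_add_sum_of_isBipartiteWith hG hst, hswap, two_mul]

theorem spectralMoment_six_of_degree_eq_card [DecidableEq V] (hG : G.IsTree)
    (hst : G.IsBipartiteWith (s : Set V) (t : Set V)) (hht : h ∈ t) (hdeg : G.degree h = s.card) :
    spectralMoment G 6 = 2 * ∑ v ∈ s, ((s.card : ℝ) ^ 2 + 3 * s.card * excessDegree G v
      + 3 * excessDegree G v ^ 2 + excessDegree G v ^ 3) := by
  have hdegree (v : V) : (G.degree v : ℝ) = excessDegree G v + 1 := by
    exact_mod_cast degree_eq_excessDegree_add_one hG v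
  rw [spectralMoment_six_of_isAcyclic hG.isAcyclic, sum_sum_neighborFinset_of_isBipartiteWith hG hst
    fun x y => by ring]
  congr 1
  refine Finset.sum_congr rfl fun v hv => ?_
  have hhv : h ∈ G.neighborFinset v := by
    rw [mem_neighborFinset]
    exact ((adj_iff_mem_of_degree_eq_card hst hht hdeg).mpr hv).symm
  have hleaf : ∀ a ∈ (G.neighborFinset v).erase h, (G.degree a : ℝ) = 1 := fun a ha => by
    rw [Finset.mem_erase, mem_neighborFinset] at ha
    rw [hdegree, excessDegree_eq_zero_of_degree_eq_card hG hst hht hdeg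
      (hst.mem_of_mem_adj hv ha.2) ha.1, Nat.cast_zero, zero_add]
  rw [← Finset.add_sum_erase _ _ hhv, Finset.sum_congr rfl fun a ha => by rw [hleaf a ha],
    Finset.sum_const, Finset.card_erase_of_mem hhv, card_neighborFinset_eq_degree, nsmul_eq_mul,
    show G.degree v - 1 = excessDegree G v from rfl, hdeg, hdegree v]
  ring

end BipartiteTrees

section Isomorphism

theorem nonempty_iso_of_card_fiber_eq {V W K : Type*} [Fintype V] [Fintype W] [DecidableEq K]
    {G : SimpleGraph V} {H : SimpleGraph W} {R : K → K → Prop} {f : V → K} {g : W → K}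
    (hf : ∀ x y, G.Adj x y ↔ R (f x) (f y)) (hg : ∀ x y, H.Adj x y ↔ R (g x) (g y))
    (hfg : ∀ c, (Finset.univ.filter (f · = c)).card = (Finset.univ.filter (g · = c)).card) :
    Nonempty (G ≃g H) := by
  have hfiber (c : K) : Nonempty ({x // f x = c} ≃ {y // g y = c}) := by
    rw [← Fintype.card_eq, Fintype.card_subtype, Fintype.card_subtype, hfg]
  have hmap := Equiv.ofFiberEquiv_map fun c => (hfiber c).some
  refine ⟨⟨Equiv.ofFiberEquiv fun c => (hfiber c).some, fun {x y} => ?_⟩⟩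
  rw [hg, hf, hmap, hmap]

theorem card_filter_coe_eq_count_map {α γ : Type*} [DecidableEq γ] (s : Finset α) (f : α → γ)
    (c : γ) : (Finset.univ.filter fun a : s => f a = c).card = (s.val.map f).count c := by
  rw [Multiset.count_map, Finset.univ_eq_attach, Finset.filter_attach (fun a => f a = c),
    Finset.card_map, Finset.card_attach, ← Finset.card_val, Finset.filter_val]
  simp only [eq_comm]

theorem exists_equiv_of_map_val_eq {α β γ : Type*} {s : Finset α} {t : Finset β} {f : α → γ}
    {g : β → γ} (hfg : s.val.map f = t.val.map g) : ∃ σ : s ≃ t, ∀ a, g (σ a) = f a := by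
  classical
  have hfiber (c : γ) : Nonempty ({a : s // f a = c} ≃ {b : t // g b = c}) := by
    rw [← Fintype.card_eq, Fintype.card_subtype, Fintype.card_subtype,
      card_filter_coe_eq_count_map s f,
      card_filter_coe_eq_count_map t g, hfg]
  exact ⟨Equiv.ofFiberEquiv fun c => (hfiber c).some,
    Equiv.ofFiberEquiv_map (f := fun a : s => f a) (g := fun b : t => g b) _⟩

/-- Labels for the vertices of a tree whose root `center` has children indexed by `ι`, all other
vertices being leaves hanging from these children; `grandchild i` labels every leaf below
`child i`. -/
inductive HubLabel (ι : Type*)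
  | center
  | child (i : ι)
  | grandchild (i : ι)

namespace HubLabel

/-- Adjacency of the vertices of such a tree, read off their labels. -/
def Adj {ι : Type*} : HubLabel ι → HubLabel ι → Prop
  | center, child _ => True
  | child _, center => True
  | child i, grandchild j => i = j
  | grandchild i, child j => i = j
  | _, _ => False

/-- `x.Marks h σ v` says that `v` deserves the label `x` when `h` is the root and `σ` enumerates its
children. -/
def Marks {V ι : Type*} (G : SimpleGraph V) (h : V) (σ : ι → V) : HubLabel ι → V → Prop
  | center, v => v = h
  | child i, v => v = σ i
  | grandchild i, v => v ≠ h ∧ G.Adj (σ i) v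

/-- The number of vertices with a given label, if the `i`-th child has `m i` leaves below it. -/
def multiplicity {ι : Type*} (m : ι → ℕ) : HubLabel ι → ℕ
  | center => 1
  | child _ => 1
  | grandchild i => m i

end HubLabel

variable {V : Type*} [Fintype V] {G : SimpleGraph V} [DecidableRel G.Adj]
  {s t : Finset V} {h : V} {ι : Type*} {σ : ι ≃ s}

theorem card_filter_marks (hst : G.IsBipartiteWith (s : Set V) (t : Set V)) (hht : h ∈ t)
    (hdeg : G.degree h = s.card) (x : HubLabel ι)
    [DecidablePred (x.Marks G h (fun i => (σ i : V)))] :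
    (Finset.univ.filter (x.Marks G h (fun i => (σ i : V)))).card
      = x.multiplicity fun i => excessDegree G (σ i : V) := by
  classical
  rcases x with _ | i | i
  · exact Finset.card_eq_one.mpr ⟨h, by ext v; simp [HubLabel.Marks]⟩
  · exact Finset.card_eq_one.mpr ⟨σ i, by ext v; simp [HubLabel.Marks]⟩
  · have hadj : h ∈ G.neighborFinset (σ i) := by
      rw [mem_neighborFinset]
      exact ((adj_iff_mem_of_degree_eq_card hst hht hdeg).mpr (σ i).2).symm
    rw [HubLabel.multiplicity, excessDegree, ← card_neighborFinset_eq_degree,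
      ← Finset.card_erase_of_mem hadj]
    congr 1
    ext v
    simp [HubLabel.Marks]

variable [Nontrivial V]

theorem existsUnique_adj_of_degree_eq_card (hG : G.IsTree)
    (hst : G.IsBipartiteWith (s : Set V) (t : Set V)) (hht : h ∈ t) (hdeg : G.degree h = s.card)
    {v : V} (hv : v ∈ t) (hvh : v ≠ h) : ∃! b, G.Adj v b := by
  rw [← degree_eq_one_iff_existsUnique_adj, degree_eq_excessDegree_add_one hG,
    excessDegree_eq_zero_of_degree_eq_card hG hst hht hdeg hv hvh]

theorem existsUnique_marks (hG : G.IsTree) (hst : G.IsBipartiteWith (s : Set V) (t : Set V))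
    (hht : h ∈ t) (hdeg : G.degree h = s.card) (v : V) :
    ∃! x : HubLabel ι, x.Marks G h (fun i => σ i) v := by
  have hdisj {a : V} (ha : a ∈ s) : a ∉ t := hst.disjoint.notMem_of_mem_left ha
  rcases mem_or_mem_of_isBipartiteWith hG hst v with hv | hv
  · obtain ⟨i, hi⟩ := σ.surjective ⟨v, hv⟩
    have hi : v = σ i := by rw [hi]
    refine ⟨.child i, hi, ?_⟩
    rintro (_ | j | j) hx
    · exact absurd hht (hdisj ((show v = h from hx) ▸ hv))
    · have hij : (σ j : V) = σ i := (show v = σ j from hx).symm.trans hi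
      rw [σ.injective (Subtype.ext hij)]
    · exact absurd (hst.mem_of_mem_adj (σ j).2 hx.2) (hdisj hv)
  · rcases eq_or_ne v h with rfl | hvh
    · refine ⟨.center, rfl, ?_⟩
      rintro (_ | j | j) hx
      · rfl
      · exact absurd hv (hdisj ((show v = σ j from hx) ▸ (σ j).2))
      · exact absurd rfl hx.1
    · obtain ⟨b, hb, hunique⟩ := existsUnique_adj_of_degree_eq_card hG hst hht hdeg hv hvh
      obtain ⟨i, hi⟩ := σ.surjective ⟨b, hst.symm.mem_of_mem_adj hv hb⟩
      have hi : b = σ i := by rw [hi]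
      refine ⟨.grandchild i, ⟨hvh, (hi ▸ hb.symm : G.Adj (σ i) v)⟩, ?_⟩
      rintro (_ | j | j) hx
      · exact absurd hx hvh
      · exact absurd hv (hdisj ((show v = σ j from hx) ▸ (σ j).2))
      · have hij : (σ j : V) = σ i := (hunique _ hx.2.symm).trans hi
        rw [σ.injective (Subtype.ext hij)]

theorem adj_iff_of_marks (hG : G.IsTree) (hst : G.IsBipartiteWith (s : Set V) (t : Set V))
    (hht : h ∈ t) (hdeg : G.degree h = s.card) {v w : V} {x y : HubLabel ι}
    (hx : x.Marks G h (fun i => σ i) v) (hy : y.Marks G h (fun i => σ i) w) :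
    G.Adj v w ↔ x.Adj y := by
  have hchild (i : ι) : G.Adj h (σ i) :=
    (adj_iff_mem_of_degree_eq_card hst hht hdeg).mpr (σ i).2
  have hdisj {a : V} (ha : a ∈ s) : a ∉ t := hst.disjoint.notMem_of_mem_left ha
  have hss {a b : V} (ha : a ∈ s) (hb : b ∈ s) : ¬ G.Adj a b := fun hab =>
    hdisj hb (hst.mem_of_mem_adj ha hab)
  have htt {a b : V} (ha : a ∈ t) (hb : b ∈ t) : ¬ G.Adj a b := fun hab =>
    hdisj (hst.symm.mem_of_mem_adj ha hab) hb
  have hgrandchild {a : V} {i j : ι} (ha : a ≠ h ∧ G.Adj (σ j) a) : G.Adj (σ i) a ↔ i = j := by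
    refine ⟨fun hi => ?_, fun hij => hij ▸ ha.2⟩
    have hat := hst.mem_of_mem_adj (σ j).2 ha.2
    have hij := (existsUnique_adj_of_degree_eq_card hG hst hht hdeg hat ha.1).unique hi.symm
      ha.2.symm
    exact σ.injective (Subtype.ext hij)
  have hmem {a : V} {i : ι} (ha : a ≠ h ∧ G.Adj (σ i) a) : a ∈ t :=
    hst.mem_of_mem_adj (σ i).2 ha.2
  rcases x with _ | i | i <;> rcases y with _ | j | j <;>
    simp only [HubLabel.Marks, HubLabel.Adj, iff_true, iff_false] at hx hy ⊢
  · exact hx ▸ hy ▸ G.irrefl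
  · exact hx ▸ hy ▸ hchild j
  · exact hx ▸ htt hht (hmem hy)
  · exact hx ▸ hy ▸ (hchild i).symm
  · exact hx ▸ hy ▸ hss (σ i).2 (σ j).2
  · exact hx ▸ hgrandchild hy
  · exact hy ▸ htt (hmem hx) hht
  · rw [hy, G.adj_comm, hgrandchild hx, eq_comm]
  · exact htt (hmem hx) (hmem hy)

theorem exists_hubLabel (hG : G.IsTree) (hst : G.IsBipartiteWith (s : Set V) (t : Set V))
    (hht : h ∈ t) (hdeg : G.degree h = s.card) (σ : ι ≃ s) [DecidableEq (HubLabel ι)] :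
    ∃ f : V → HubLabel ι, (∀ v w, G.Adj v w ↔ (f v).Adj (f w)) ∧
      ∀ x, (Finset.univ.filter (f · = x)).card
        = x.multiplicity fun i => excessDegree G (σ i : V) := by
  classical
  choose f hf hunique using existsUnique_marks (σ := σ) hG hst hht hdeg
  refine ⟨f, fun v w => adj_iff_of_marks hG hst hht hdeg (hf v) (hf w), fun x => ?_⟩
  have hiff (v : V) : f v = x ↔ x.Marks G h (fun i => (σ i : V)) v :=
    ⟨fun hx => hx ▸ hf v, fun hx => (hunique v x hx).symm⟩
  rw [← card_filter_marks hst hht hdeg]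
  simp only [hiff]

theorem nonempty_iso_of_degree_eq_card {W : Type*} [Fintype W] [Nontrivial W] {H : SimpleGraph W}
    [DecidableRel H.Adj] {s' t' : Finset W} {h' : W} (hG : G.IsTree)
    (hst : G.IsBipartiteWith (s : Set V) (t : Set V)) (hht : h ∈ t) (hdeg : G.degree h = s.card)
    (hH : H.IsTree) (hst' : H.IsBipartiteWith (s' : Set W) (t' : Set W)) (hht' : h' ∈ t')
    (hdeg' : H.degree h' = s'.card)
    (hmap : s.val.map (fun v => excessDegree G v) = s'.val.map (fun v => excessDegree H v)) :
    Nonempty (G ≃g H) := by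
  classical
  obtain ⟨σ, hσ⟩ := exists_equiv_of_map_val_eq hmap
  obtain ⟨f, hf, hfcard⟩ := exists_hubLabel hG hst hht hdeg (Equiv.refl s)
  obtain ⟨g, hg, hgcard⟩ := exists_hubLabel hH hst' hht' hdeg' σ
  refine nonempty_iso_of_card_fiber_eq hf hg fun x => ?_
  rw [hfcard, hgcard]
  simp only [hσ]
  rfl

end Isomorphism

section SumsOfSquares

variable {ι : Type*} {s : Finset ι} {x : ι → ℕ} {v w : ι}

theorem sum_pow_succ_le {m : ℕ} (hm : ∀ i ∈ s, x i ≤ m) (k : ℕ) :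
    ∑ i ∈ s, x i ^ (k + 1) ≤ m * ∑ i ∈ s, x i ^ k := by
  rw [Finset.mul_sum]
  refine Finset.sum_le_sum fun i hi => ?_
  rw [pow_succ']
  exact Nat.mul_le_mul_right _ (hm i hi)

theorem sum_sq_le_mul_sum {m : ℕ} (hm : ∀ i ∈ s, x i ≤ m) :
    ∑ i ∈ s, x i ^ 2 ≤ m * ∑ i ∈ s, x i := by
  simpa only [pow_one] using sum_pow_succ_le hm 1

theorem sum_sq_le_sq_sum : ∑ i ∈ s, x i ^ 2 ≤ (∑ i ∈ s, x i) ^ 2 :=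
  Finset.sum_sq_le_sq_sum_of_nonneg fun _ _ => Nat.zero_le _

theorem exists_eq_sum_of_sq_sum_le_sum_sq (hs : s.Nonempty)
    (h : (∑ i ∈ s, x i) ^ 2 ≤ ∑ i ∈ s, x i ^ 2) : ∃ v ∈ s, x v = ∑ i ∈ s, x i := by
  obtain ⟨v, hv, hmax⟩ := s.exists_max_image x hs
  have hle := Finset.single_le_sum (fun i _ => Nat.zero_le (x i)) hv
  refine ⟨v, hv, hle.antisymm ?_⟩
  rcases Nat.eq_zero_or_pos (∑ i ∈ s, x i) with hzero | hpos
  · exact hzero.trans_le (Nat.zero_le _)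
  · rw [sq] at h
    exact Nat.le_of_mul_le_mul_right (h.trans (sum_sq_le_mul_sum hmax)) hpos

theorem sum_sq_le_of_forall_le {M r : ℕ} (hM : ∀ i ∈ s, x i ≤ M) (hsum : ∑ i ∈ s, x i = M + r) :
    ∑ i ∈ s, x i ^ 2 ≤ M ^ 2 + r ^ 2 := by
  classical
  rcases s.eq_empty_or_nonempty with rfl | hs
  · exact Nat.zero_le _
  obtain ⟨v, hv, hmax⟩ := s.exists_max_image x hs
  have hvM := hM v hv
  rcases le_or_gt (M + r) (2 * x v) with hbig | hsmall
  · have hrest := Finset.add_sum_erase s x hv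
    have hrest_sq := Finset.add_sum_erase s (fun i => x i ^ 2) hv
    have hle := sum_sq_le_sq_sum (s := s.erase v) (x := x)
    -- On `[(M + r) / 2, M]` the convex function `m ↦ m² + (M + r - m)²` is largest at `m = M`.
    nlinarith
  · have hle := sum_sq_le_mul_sum hmax
    rw [hsum] at hle
    nlinarith [sq_nonneg ((M : ℤ) - r)]

theorem sum_sq_lt_of_forall_ne {t : ℕ} (ht : 1 ≤ t) (hle : ∀ i ∈ s, x i ≤ t)
    (hsum : ∑ i ∈ s, x i = t + 2)
    (hne : ∀ v ∈ s, ∀ w ∈ s, v ≠ w → x v = t → x w ≠ 2) : ∑ i ∈ s, x i ^ 2 < t ^ 2 + 4 := by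
  classical
  by_cases hmax : ∃ v ∈ s, x v = t
  · obtain ⟨v, hv, hvt⟩ := hmax
    have hrest := Finset.add_sum_erase s x hv
    have hrest_le : ∀ i ∈ s.erase v, x i ≤ 1 := fun i hi => by
      have hi2 := Finset.single_le_sum (fun i _ => Nat.zero_le (x i)) hi
      have := hne v hv i (Finset.mem_of_mem_erase hi) (Finset.ne_of_mem_erase hi).symm hvt
      omega
    rw [← Finset.add_sum_erase s _ hv, hvt]
    have := sum_sq_le_mul_sum hrest_le
    omega
  · have hlt : ∀ i ∈ s, x i ≤ t - 1 := fun i hi =>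
      Nat.le_pred_of_lt ((hle i hi).lt_of_ne fun hit => hmax ⟨i, hi, hit⟩)
    obtain ⟨t, rfl⟩ := Nat.exists_eq_add_of_le' ht
    rw [Nat.add_sub_cancel] at hlt
    rcases le_or_gt t 2 with hsmall | hbig
    · have := sum_sq_le_mul_sum hlt
      nlinarith
    · have := sum_sq_le_of_forall_le (r := 3) hlt hsum
      nlinarith

theorem map_val_eq_of_add_eq_sum (hv : v ∈ s) (hw : w ∈ s) (hvw : v ≠ w)
    (hsum : x v + x w = ∑ i ∈ s, x i) :
    s.val.map x = x v ::ₘ x w ::ₘ Multiset.replicate (s.card - 2) 0 := by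
  classical
  have hw' : w ∈ s.erase v := Finset.mem_erase.mpr ⟨hvw.symm, hw⟩
  rw [← Finset.add_sum_erase s x hv, ← Finset.add_sum_erase _ x hw', ← add_assoc,
    left_eq_add, Finset.sum_eq_zero_iff] at hsum
  rw [← Multiset.cons_erase (a := v) hv, ← Finset.erase_val, ← Multiset.cons_erase (a := w) hw',
    ← Finset.erase_val, Multiset.map_cons, Multiset.map_cons, Multiset.map_congr rfl hsum,
    Multiset.map_const', Finset.card_val, Finset.card_erase_of_mem hw', Finset.card_erase_of_mem hv]
  rfl

end SumsOfSquares

section BTree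

theorem isAcyclic_of_unique_lt {V : Type*} [LinearOrder V] {G : SimpleGraph V}
    (hG : ∀ v w w', w < v → w' < v → G.Adj v w → G.Adj v w' → w = w') : G.IsAcyclic := by
  intro u c hc
  -- Both neighbors on the cycle of its largest vertex are smaller than that vertex.
  obtain ⟨m, hm, hmax⟩ := c.support.toFinset.exists_max_image id ⟨u, by simp⟩
  rw [List.mem_toFinset] at hm
  have hc' := hc.rotate hm
  have hlt : ∀ v ∈ (c.rotate m hm).support, G.Adj m v → v < m := fun v hv hadj =>
    (hmax v (by rwa [List.mem_toFinset, ← Walk.mem_support_rotate_iff c m hm])).lt_of_ne hadj.ne'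
  have hsnd := (c.rotate m hm).adj_snd hc'.not_nil
  have hpen := ((c.rotate m hm).adj_penultimate hc'.not_nil).symm
  exact hc'.snd_ne_penultimate (hG m _ _ (hlt _ (Walk.getVert_mem_support ..) hsnd)
    (hlt _ (Walk.getVert_mem_support ..) hpen) hsnd hpen)

theorem connected_of_exists_lt {V : Type*} [LT V] [WellFoundedLT V] {G : SimpleGraph V}
    {r : V} (hG : ∀ v, v ≠ r → ∃ w < v, G.Adj v w) : G.Connected := by
  have hreach (v : V) : G.Reachable v r := by
    induction v using WellFoundedLT.induction with
    | ind v ih =>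
      rcases eq_or_ne v r with rfl | hv
      · rfl
      · obtain ⟨w, hw, hadj⟩ := hG v hv
        exact hadj.reachable.trans (ih w hw)
  exact { preconnected := fun v w => (hreach v).trans (hreach w).symm, nonempty := ⟨r⟩ }

theorem card_filter_eq_of_val_mem_iff {n : ℕ} {P : Fin n → Prop} [DecidablePred P] {s : Finset ℕ}
    (hlt : ∀ a ∈ s, a < n) (hs : ∀ a : Fin n, a.val ∈ s ↔ P a) :
    (Finset.univ.filter P).card = s.card := by
  rw [← Finset.card_map Fin.valEmbedding]
  congr 1
  ext a
  simpa [← hs, Fin.exists_iff] using hlt a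

variable {p q k l : ℕ}

theorem bTree_adj_of_lt (hq : 2 ≤ q) {a b : Fin (p + q)} (hab : a < b) :
    (BTree p q k l).Adj a b ↔ (a.val = 0 ∧ b.val ≤ q) ∨
      (a.val = 2 ∧ q + 1 ≤ b.val ∧ b.val ≤ q + k) ∨
      (q + k + 1 ≤ b.val ∧ b.val ≤ q + k + l ∧ a.val = b.val - (q + k) + 2) ∨
      (a.val = 1 ∧ q + k + l + 1 ≤ b.val) := by
  rw [Fin.lt_def] at hab
  rw [BTree, fromRel_adj, ne_eq, Fin.ext_iff, or_iff_left (by omega)]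
  omega

theorem isTree_bTree (hq : l + 2 ≤ q) : (BTree p q k l).IsTree where
  connected := by
    refine connected_of_exists_lt (r := ⟨0, by omega⟩) fun b hb => ?_
    have hb0 : b.val ≠ 0 := fun h => hb (Fin.ext h)
    have hbn := b.isLt
    let parent : ℕ := if b.val ≤ q then 0 else if b.val ≤ q + k then 2
      else if b.val ≤ q + k + l then b.val - (q + k) + 2 else 1
    have hparent : parent < b.val := by grind
    refine ⟨⟨parent, by omega⟩, hparent, ?_⟩
    rw [adj_comm, bTree_adj_of_lt (by omega) hparent]
    grind
  isAcyclic := by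
    refine isAcyclic_of_unique_lt fun b a a' ha ha' hadj hadj' => ?_
    rw [adj_comm, bTree_adj_of_lt (by omega) ha] at hadj
    rw [adj_comm, bTree_adj_of_lt (by omega) ha'] at hadj'
    rw [Fin.lt_def] at ha ha'
    rw [Fin.ext_iff]
    omega

/-- The part of size `q` of the bipartition of `BTree p q k l`: the neighbors of the vertex `0`. -/
def bTreePart (p q : ℕ) : Finset (Fin (p + q)) :=
  Finset.univ.filter fun a => 1 ≤ a.val ∧ a.val ≤ q

theorem mem_bTreePart {v : Fin (p + q)} : v ∈ bTreePart p q ↔ 1 ≤ v.val ∧ v.val ≤ q := by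
  simp [bTreePart]

theorem card_bTreePart (hp : 1 ≤ p) : (bTreePart p q).card = q := by
  rw [bTreePart, card_filter_eq_of_val_mem_iff (s := Finset.Icc 1 q), Nat.card_Icc,
    Nat.add_sub_cancel]
  · intro a ha
    rw [Finset.mem_Icc] at ha
    omega
  · exact fun a => Finset.mem_Icc

theorem isBipartiteWith_bTree (hq : l + 2 ≤ q) : (BTree p q k l).IsBipartiteWith
    (bTreePart p q : Set (Fin (p + q))) ((bTreePart p q)ᶜ : Finset (Fin (p + q))) where
  disjoint := Finset.disjoint_coe.mpr disjoint_compl_right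
  mem_of_adj a b hab := by
    wlog hlt : a < b generalizing a b
    · exact (this b a hab.symm (hab.ne'.lt_of_le (not_lt.mp hlt))).symm.imp And.symm And.symm
    rw [bTree_adj_of_lt (by omega) hlt] at hab
    rw [Fin.lt_def] at hlt
    simp only [Finset.mem_coe, Finset.mem_compl, mem_bTreePart]
    rcases hab with h | h | h | h
    · exact .inr (by omega)
    all_goals exact .inl (by omega)

variable [DecidableRel (BTree p q k l).Adj] {v : Fin (p + q)}

theorem degree_bTree_zero (hp : 1 ≤ p) (hq : 2 ≤ q) (hv : v.val = 0) :
    (BTree p q k l).degree v = q := by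
  suffices h : (BTree p q k l).neighborFinset v = bTreePart p q by
    rw [← card_neighborFinset_eq_degree, h, card_bTreePart hp]
  ext a
  rw [mem_neighborFinset, mem_bTreePart]
  rcases eq_or_ne a v with rfl | hav
  · simp [hv]
  · have hva : v < a := by rw [ne_eq, Fin.ext_iff] at hav; rw [Fin.lt_def]; omega
    rw [bTree_adj_of_lt hq hva]
    omega

theorem excessDegree_bTree_eq_card {s : Finset ℕ} (hq : 2 ≤ q) (hv : v ∈ bTreePart p q)
    (hlt : ∀ a ∈ s, v.val < a ∧ a < p + q)
    (hs : ∀ a : Fin (p + q), v < a → (a.val ∈ s ↔ (BTree p q k l).Adj v a)) :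
    excessDegree (BTree p q k l) v = s.card := by
  rw [mem_bTreePart] at hv
  obtain ⟨root, hroot0⟩ : ∃ r : Fin (p + q), r.val = 0 := ⟨⟨0, by omega⟩, rfl⟩
  have hroot : root < v := by rw [Fin.lt_def]; omega
  have hadj : root ∈ (BTree p q k l).neighborFinset v := by
    rw [mem_neighborFinset, adj_comm, bTree_adj_of_lt hq hroot]
    exact .inl ⟨hroot0, hv.2⟩
  have hlarger (a : Fin (p + q)) : a.val ∈ s ↔ a ≠ root ∧ (BTree p q k l).Adj v a := by
    rcases lt_trichotomy a v with hav | rfl | hva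
    · rw [adj_comm, bTree_adj_of_lt hq hav, ne_eq, Fin.ext_iff]
      have hsmall : a.val ∉ s := fun ha => (hlt a ha).1.not_gt hav
      rw [Fin.lt_def] at hav
      simp only [hsmall, false_iff]
      omega
    · have hself : a.val ∉ s := fun ha => (hlt a ha).1.false
      simp [hself]
    · simp [hs a hva, (hroot.trans hva).ne']
  rw [excessDegree, ← card_neighborFinset_eq_degree, ← Finset.card_erase_of_mem hadj,
    ← card_filter_eq_of_val_mem_iff (fun a ha => (hlt a ha).2) hlarger]
  congr 1
  ext a
  rw [Finset.mem_erase, mem_neighborFinset, Finset.mem_filter]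
  simp only [Finset.mem_univ, true_and]

theorem excessDegree_bTree_one (hq : 2 ≤ q) (hv : v.val = 1) :
    excessDegree (BTree p q k l) v = p - (k + l + 1) := by
  rw [excessDegree_bTree_eq_card (s := Finset.Ico (q + k + l + 1) (p + q)) hq, Nat.card_Ico]
  · omega
  · rw [mem_bTreePart]
    omega
  · intro a ha
    rw [Finset.mem_Ico] at ha
    omega
  · intro a hva
    rw [bTree_adj_of_lt hq hva, Finset.mem_Ico, hv]
    omega

theorem excessDegree_bTree_two (hq : 2 ≤ q) (hp : k + 1 ≤ p) (hv : v.val = 2) :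
    excessDegree (BTree p q k l) v = k := by
  rw [excessDegree_bTree_eq_card (s := Finset.Ioc q (q + k)) hq, Nat.card_Ioc,
    Nat.add_sub_cancel_left]
  · rw [mem_bTreePart]
    omega
  · intro a ha
    rw [Finset.mem_Ioc] at ha
    omega
  · intro a hva
    rw [bTree_adj_of_lt hq hva, Finset.mem_Ioc, hv]
    omega

theorem excessDegree_bTree_three (hq : 3 ≤ q) (hl : 1 ≤ l) (hp : k + l + 1 ≤ p) (hv : v.val = 3) :
    excessDegree (BTree p q k l) v = 1 := by
  rw [excessDegree_bTree_eq_card (s := {q + k + 1}) (by omega), Finset.card_singleton]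
  · rw [mem_bTreePart]
    omega
  · intro a ha
    rw [Finset.mem_singleton] at ha
    omega
  · intro a hva
    rw [bTree_adj_of_lt (by omega) hva, Finset.mem_singleton, hv]
    omega

end BTree

section MomentsOfBTree

variable {p q k l : ℕ}

theorem nontrivial_fin_add (hp : 1 ≤ p) (hq : 1 ≤ q) : Nontrivial (Fin (p + q)) :=
  Fin.nontrivial_iff_two_le.mpr (by omega)

theorem map_excessDegree_bTree_of_add_eq [DecidableRel (BTree p q k l).Adj]
    (hq : l + 2 ≤ q) {v w : Fin (p + q)} (hv : v ∈ bTreePart p q) (hw : w ∈ bTreePart p q)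
    (hvw : v ≠ w)
    (hsum : excessDegree (BTree p q k l) v + excessDegree (BTree p q k l) w + 1 = p) :
    (bTreePart p q).val.map (fun a => excessDegree (BTree p q k l) a)
      = excessDegree (BTree p q k l) v ::ₘ excessDegree (BTree p q k l) w ::ₘ
        Multiset.replicate (q - 2) 0 := by
  have hp : 1 ≤ p := by omega
  have : Nontrivial (Fin (p + q)) := nontrivial_fin_add hp (by omega)
  have htotal := sum_excessDegree_add_one (isTree_bTree hq)
    (isBipartiteWith_bTree (p := p) (k := k) hq)
  rw [Finset.card_compl, card_bTreePart hp, Fintype.card_fin, Nat.add_sub_cancel] at htotal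
  have h := map_val_eq_of_add_eq_sum (x := fun a => excessDegree (BTree p q k l) a) hv hw hvw
    (by omega)
  rwa [card_bTreePart hp] at h

theorem map_excessDegree_bTree_zero [DecidableRel (BTree p q k 0).Adj] (hp : k + 1 ≤ p)
    (hq : 2 ≤ q) :
    (bTreePart p q).val.map (fun a => excessDegree (BTree p q k 0) a)
      = (p - (k + 1)) ::ₘ k ::ₘ Multiset.replicate (q - 2) 0 := by
  obtain ⟨v, hv⟩ : ∃ v : Fin (p + q), v.val = 1 := ⟨⟨1, by omega⟩, rfl⟩
  obtain ⟨w, hw⟩ : ∃ w : Fin (p + q), w.val = 2 := ⟨⟨2, by omega⟩, rfl⟩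
  have hv_excess := excessDegree_bTree_one (k := k) (l := 0) hq hv
  have hw_excess := excessDegree_bTree_two (l := 0) hq hp hw
  have h := map_excessDegree_bTree_of_add_eq (k := k) (l := 0) (v := v) (w := w) hq
    (by rw [mem_bTreePart]; omega) (by rw [mem_bTreePart]; omega)
    (by rw [ne_eq, Fin.ext_iff]; omega) (by omega)
  rwa [hv_excess, hw_excess] at h

theorem map_excessDegree_bTree_zero_one [DecidableRel (BTree p q 0 1).Adj] (hp : 2 ≤ p)
    (hq : 3 ≤ q) :
    (bTreePart p q).val.map (fun a => excessDegree (BTree p q 0 1) a)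
      = (p - 2) ::ₘ 1 ::ₘ Multiset.replicate (q - 2) 0 := by
  obtain ⟨v, hv⟩ : ∃ v : Fin (p + q), v.val = 1 := ⟨⟨1, by omega⟩, rfl⟩
  obtain ⟨w, hw⟩ : ∃ w : Fin (p + q), w.val = 3 := ⟨⟨3, by omega⟩, rfl⟩
  have hv_excess := excessDegree_bTree_one (k := 0) (l := 1) (by omega) hv
  have hw_excess := excessDegree_bTree_three (k := 0) (l := 1) hq le_rfl hp hw
  have h := map_excessDegree_bTree_of_add_eq (k := 0) (l := 1) (v := v) (w := w) hq
    (by rw [mem_bTreePart]; omega) (by rw [mem_bTreePart]; omega)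
    (by rw [ne_eq, Fin.ext_iff]; omega) (by omega)
  rwa [hv_excess, hw_excess] at h

theorem exists_degree_bTree_eq_card [DecidableRel (BTree p q k l).Adj] (hp : 1 ≤ p) (hq : 2 ≤ q) :
    ∃ h ∈ (bTreePart p q)ᶜ, (BTree p q k l).degree h = (bTreePart p q).card := by
  obtain ⟨h, hh⟩ : ∃ h : Fin (p + q), h.val = 0 := ⟨⟨0, by omega⟩, rfl⟩
  refine ⟨h, ?_, ?_⟩
  · rw [Finset.mem_compl, mem_bTreePart]
    omega
  · rw [degree_bTree_zero hp hq hh, card_bTreePart hp]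

theorem sum_bTreePart_apply_excessDegree [DecidableRel (BTree p q k 0).Adj] (hp : k + 1 ≤ p)
    (hq : 2 ≤ q) {M : Type*} [AddCommMonoid M] (f : ℕ → M) :
    ∑ v ∈ bTreePart p q, f (excessDegree (BTree p q k 0) v)
      = f (p - (k + 1)) + f k + (q - 2) • f 0 := by
  rw [Finset.sum, ← Function.comp_def f, ← Multiset.map_map, map_excessDegree_bTree_zero hp hq]
  simp only [Multiset.map_cons, Multiset.map_replicate, Multiset.sum_cons, Multiset.sum_replicate,
    add_assoc]

theorem sum_sq_excessDegree_bTree [DecidableRel (BTree p q k 0).Adj] (hp : k + 1 ≤ p)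
    (hq : 2 ≤ q) :
    ∑ v, excessDegree (BTree p q k 0) v ^ 2 = (q - 1) ^ 2 + (p - (k + 1)) ^ 2 + k ^ 2 := by
  have : Nontrivial (Fin (p + q)) := nontrivial_fin_add (by omega) (by omega)
  have htree : (BTree p q k 0).IsTree := isTree_bTree hq
  have hbip : (BTree p q k 0).IsBipartiteWith _ _ := isBipartiteWith_bTree hq
  obtain ⟨h, hh, hdeg⟩ := exists_degree_bTree_eq_card (k := k) (l := 0) (by omega : 1 ≤ p) hq
  rw [← sum_add_sum_of_isBipartiteWith htree hbip,
    sum_sq_excessDegree_of_degree_eq_card htree hbip hh hdeg,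
    sum_bTreePart_apply_excessDegree hp hq (· ^ 2), card_bTreePart (by omega), zero_pow two_ne_zero,
    smul_zero]
  ring

theorem spectralMoment_six_bTree (hp : k + 1 ≤ p) (hq : 2 ≤ q) :
    spectralMoment (BTree p q k 0) 6 = 2 * ((q : ℝ) ^ 3 + 3 * q * (p - 1)
      + 3 * ((p - (k + 1)) ^ 2 + k ^ 2) + ((p - (k + 1)) ^ 3 + k ^ 3)) := by
  classical
  have : Nontrivial (Fin (p + q)) := nontrivial_fin_add (by omega) (by omega)
  obtain ⟨h, hh, hdeg⟩ := exists_degree_bTree_eq_card (k := k) (l := 0) (by omega : 1 ≤ p) hq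
  rw [spectralMoment_six_of_degree_eq_card (isTree_bTree hq) (isBipartiteWith_bTree hq)
    hh hdeg, card_bTreePart (by omega), sum_bTreePart_apply_excessDegree hp hq
    fun e => (q : ℝ) ^ 2 + 3 * q * e + 3 * e ^ 2 + e ^ 3]
  push_cast [hp, hq, nsmul_eq_mul]
  ring

end MomentsOfBTree

section TreesWithHub

variable {p q : ℕ} {G : SimpleGraph (Fin (p + q))} [DecidableRel G.Adj]
  {s t : Finset (Fin (p + q))} {h v w : Fin (p + q)}

theorem nonempty_iso_bTree_of_map_eq {k l : ℕ} [DecidableRel (BTree p q k l).Adj] (hp : 1 ≤ p)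
    (hq : l + 2 ≤ q) (hG : G.IsTree) (hst : G.IsBipartiteWith (s : Set (Fin (p + q))) t)
    (hht : h ∈ t) (hdeg : G.degree h = s.card)
    (hmap : s.val.map (fun a => excessDegree G a)
      = (bTreePart p q).val.map fun a => excessDegree (BTree p q k l) a) :
    Nonempty (G ≃g BTree p q k l) := by
  have : Nontrivial (Fin (p + q)) := nontrivial_fin_add hp (by omega)
  obtain ⟨h', hht', hdeg'⟩ := exists_degree_bTree_eq_card (k := k) (l := l) hp
    (le_of_add_le_right hq)
  exact nonempty_iso_of_degree_eq_card hG hst hht hdeg (isTree_bTree hq)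
    (isBipartiteWith_bTree hq) hht' hdeg' hmap

theorem nonempty_iso_bTree_zero {k : ℕ} (hp : k + 1 ≤ p) (hq : 2 ≤ q) (hG : G.IsTree)
    (hst : G.IsBipartiteWith (s : Set (Fin (p + q))) t) (hs : s.card = q) (ht : t.card = p)
    (hht : h ∈ t) (hdeg : G.degree h = s.card) (hv : v ∈ s) (hw : w ∈ s) (hvw : v ≠ w)
    (hv_excess : excessDegree G v = p - (k + 1)) (hw_excess : excessDegree G w = k) :
    Nonempty (G ≃g BTree p q k 0) := by
  classical
  have : Nontrivial (Fin (p + q)) := nontrivial_fin_add (by omega) (by omega)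
  have hsum := sum_excessDegree_add_one hG hst
  refine nonempty_iso_bTree_of_map_eq (by omega) hq hG hst hht hdeg ?_
  rw [map_excessDegree_bTree_zero hp hq, map_val_eq_of_add_eq_sum
    (x := fun a => excessDegree G a) hv hw hvw (by omega), hv_excess, hw_excess, hs]

theorem nonempty_iso_bTree_zero_one (hp : 2 ≤ p) (hq : 3 ≤ q) (hG : G.IsTree)
    (hst : G.IsBipartiteWith (s : Set (Fin (p + q))) t) (hs : s.card = q) (ht : t.card = p)
    (hht : h ∈ t) (hdeg : G.degree h = s.card) (hv : v ∈ s) (hw : w ∈ s) (hvw : v ≠ w)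
    (hv_excess : excessDegree G v = p - 2) (hw_excess : excessDegree G w = 1) :
    Nonempty (G ≃g BTree p q 0 1) := by
  classical
  have : Nontrivial (Fin (p + q)) := nontrivial_fin_add (by omega) (by omega)
  have hsum := sum_excessDegree_add_one hG hst
  refine nonempty_iso_bTree_of_map_eq (by omega) hq hG hst hht hdeg ?_
  rw [map_excessDegree_bTree_zero_one hp hq, map_val_eq_of_add_eq_sum
    (x := fun a => excessDegree G a) hv hw hvw (by omega), hv_excess, hw_excess, hs]

theorem excessDegree_le_sub_three (hp : 3 ≤ p) (hq : 3 ≤ q) (hG : G.IsTree)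
    (hst : G.IsBipartiteWith (s : Set (Fin (p + q))) t) (hs : s.card = q) (ht : t.card = p)
    (hht : h ∈ t) (hdeg : G.degree h = s.card)
    (h0 : ¬ Nonempty (G ≃g BTree p q 0 0)) (h1 : ¬ Nonempty (G ≃g BTree p q 0 1))
    (hv : v ∈ s) : excessDegree G v ≤ p - 3 := by
  have : Nontrivial (Fin (p + q)) := nontrivial_fin_add (by omega) (by omega)
  have hsum := sum_excessDegree_add_one hG hst
  have hrest := Finset.add_sum_erase s (fun a => excessDegree G a) hv
  have hcard := Finset.card_erase_of_mem hv
  by_contra! hlarge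
  -- The other vertices of `s` share an excess of at most `1`.
  rcases eq_or_ne (excessDegree G v) (p - 2) with hv_excess | hv_excess
  · obtain ⟨w, hw, hw0⟩ := Finset.exists_ne_zero_of_sum_ne_zero
      (show ∑ a ∈ s.erase v, excessDegree G a ≠ 0 by omega)
    have hle := Finset.single_le_sum (f := fun a => excessDegree G a) (fun _ _ => Nat.zero_le _) hw
    obtain ⟨hwv, hw⟩ := Finset.mem_erase.mp hw
    exact h1 (nonempty_iso_bTree_zero_one (by omega) hq hG hst hs ht hht hdeg hv hw hwv.symm
      hv_excess (by omega))
  · obtain ⟨w, hw⟩ := Finset.card_pos.mp (show 0 < (s.erase v).card by omega)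
    have hle := Finset.single_le_sum (f := fun a => excessDegree G a) (fun _ _ => Nat.zero_le _) hw
    obtain ⟨hwv, hw⟩ := Finset.mem_erase.mp hw
    exact h0 (nonempty_iso_bTree_zero (by omega) (by omega) hG hst hs ht hht hdeg hv hw hwv.symm
      (by omega) (by omega))

theorem sLt_bTree_two_zero_of_degree_eq_card (hp : 4 ≤ p) (hq : 3 ≤ q) (hG : G.IsTree)
    (hst : G.IsBipartiteWith (s : Set (Fin (p + q))) t) (hs : s.card = q) (ht : t.card = p)
    (hht : h ∈ t) (hdeg : G.degree h = s.card)
    (h0 : ¬ Nonempty (G ≃g BTree p q 0 0)) (h1 : ¬ Nonempty (G ≃g BTree p q 0 1))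
    (h2 : ¬ Nonempty (G ≃g BTree p q 2 0)) : SLt G (BTree p q 2 0) := by
  classical
  have : Nontrivial (Fin (p + q)) := nontrivial_fin_add (by omega) (by omega)
  have hsum := sum_excessDegree_add_one hG hst
  have hlt : ∑ a ∈ s, excessDegree G a ^ 2 < (p - 3) ^ 2 + 4 := by
    refine sum_sq_lt_of_forall_ne (by omega) (fun v hv => excessDegree_le_sub_three (by omega) hq
      hG hst hs ht hht hdeg h0 h1 hv) (by omega) fun v hv w hw hvw hv_excess hw_excess => ?_
    exact h2 (nonempty_iso_bTree_zero (by omega) (by omega) hG hst hs ht hht hdeg hv hw hvw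
      hv_excess hw_excess)
  refine sLt_of_sum_sq_excessDegree_lt hG (isTree_bTree (by omega))
    (by rw [Fintype.card_fin]; omega) ?_
  rw [← sum_add_sum_of_isBipartiteWith hG hst,
    sum_sq_excessDegree_of_degree_eq_card hG hst hht hdeg, sum_sq_excessDegree_bTree (by omega)
    (by omega), hs]
  simp only [Nat.reduceAdd, Nat.reducePow]
  omega

end TreesWithHub

section Comparison

theorem spectralMoment_six_le_of_degree_eq_card {V : Type*} [Fintype V] [Nontrivial V]
    [DecidableEq V] {G : SimpleGraph V} [DecidableRel G.Adj] {s t : Finset V} {h : V}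
    (hG : G.IsTree) (hst : G.IsBipartiteWith (s : Set V) t) (hht : h ∈ t)
    (hdeg : G.degree h = s.card) {M : ℕ} (hM : ∀ v ∈ s, excessDegree G v ≤ M) :
    spectralMoment G 6 ≤ 2 * ((s.card : ℝ) ^ 3 + 3 * s.card * (t.card - 1)
      + (M + 3) * ∑ v ∈ s, (excessDegree G v : ℝ) ^ 2) := by
  have hsum : ∑ v ∈ s, (excessDegree G v : ℝ) = t.card - 1 := by
    rw [eq_sub_iff_add_eq]
    exact_mod_cast sum_excessDegree_add_one hG hst
  have hcube : ∑ v ∈ s, (excessDegree G v : ℝ) ^ 3 ≤ M * ∑ v ∈ s, (excessDegree G v : ℝ) ^ 2 := by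
    exact_mod_cast sum_pow_succ_le hM 2
  rw [spectralMoment_six_of_degree_eq_card hG hst hht hdeg]
  simp only [Finset.sum_add_distrib, ← Finset.mul_sum, Finset.sum_const, nsmul_eq_mul, hsum]
  linarith

variable {V : Type*} [Fintype V] {G : SimpleGraph V} [DecidableRel G.Adj]
  {s t : Finset V}

theorem excessDegree_le_sub_two (hst : G.IsBipartiteWith (s : Set V) t)
    (hne : ∀ v ∈ s, G.degree v ≠ t.card) : ∀ v ∈ s, excessDegree G v ≤ t.card - 2 := by
  intro v hv
  have hle := isBipartiteWith_degree_le hst hv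
  have hvne := hne v hv
  rw [excessDegree]
  omega

variable [Nontrivial V]

theorem sum_sq_excessDegree_le_of_forall_degree_ne (hG : G.IsTree)
    (hst : G.IsBipartiteWith (s : Set V) t) (ht : 2 ≤ t.card)
    (hne : ∀ v ∈ s, G.degree v ≠ t.card) :
    ∑ v ∈ s, excessDegree G v ^ 2 ≤ (t.card - 2) ^ 2 + 1 := by
  have hsum := sum_excessDegree_add_one hG hst
  have hle := sum_sq_le_of_forall_le (r := 1) (excessDegree_le_sub_two hst hne) (by omega)
  rwa [one_pow] at hle

theorem sum_sq_excessDegree_le (hG : G.IsTree) (hst : G.IsBipartiteWith (s : Set V) t) :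
    ∑ v ∈ s, excessDegree G v ^ 2 ≤ (t.card - 1) ^ 2 := by
  rw [← sum_excessDegree_add_one hG hst, Nat.add_sub_cancel]
  exact sum_sq_le_sq_sum

theorem exists_degree_eq_card_of_sq_le (hG : G.IsTree) (hst : G.IsBipartiteWith (s : Set V) t)
    (hs : s.Nonempty) (hsq : (t.card - 1) ^ 2 ≤ ∑ v ∈ s, excessDegree G v ^ 2) :
    ∃ v ∈ s, G.degree v = t.card := by
  rw [← sum_excessDegree_add_one hG hst, Nat.add_sub_cancel] at hsq
  obtain ⟨v, hv, hv_excess⟩ := exists_eq_sum_of_sq_sum_le_sum_sq hs hsq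
  refine ⟨v, hv, ?_⟩
  rw [degree_eq_excessDegree_add_one hG, hv_excess, sum_excessDegree_add_one hG hst]

variable {p q : ℕ}

theorem sq_add_sq_le_of_two_mul_le (hp : 3 ≤ p) (h : 2 * p ≤ q + 4) :
    (q - 2) ^ 2 + 1 + (p - 1) ^ 2 ≤ (q - 1) ^ 2 + (p - 3) ^ 2 + 4 := by
  zify [hp, show 2 ≤ q by omega, show 1 ≤ p by omega, show 1 ≤ q by omega]
  linarith

theorem le_two_mul_of_sq_add_sq_le (hp : 3 ≤ p) (hq : 2 ≤ q)
    (h : (q - 1) ^ 2 + (p - 3) ^ 2 + 4 ≤ (q - 2) ^ 2 + 1 + (p - 1) ^ 2) : q + 4 ≤ 2 * p := by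
  zify [hp, hq, show 1 ≤ p by omega, show 1 ≤ q by omega] at h ⊢
  linarith

variable {T : SimpleGraph (Fin (p + q))} [DecidableRel T.Adj] {A B : Finset (Fin (p + q))}

theorem spectralMoment_six_lt_bTree_two_zero (hp : 5 ≤ p) (hq : q + 4 = 2 * p) (hT : T.IsTree)
    (hAB : T.IsBipartiteWith (A : Set (Fin (p + q))) B) (hA : A.card = p) (hB : B.card = q)
    {h : Fin (p + q)} (hh : h ∈ B) (hdeg : T.degree h = A.card)
    (hle : ∀ v ∈ A, excessDegree T v ≤ q - 2)
    (hsq : ∑ v ∈ A, excessDegree T v ^ 2 = (q - 2) ^ 2 + 1) :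
    spectralMoment T 6 < spectralMoment (BTree p q 2 0) 6 := by
  have : Nontrivial (Fin (p + q)) := nontrivial_fin_add (by omega) (by omega)
  have hbound := spectralMoment_six_le_of_degree_eq_card hT hAB hh hdeg hle
  have hq2 : 2 ≤ q := by omega
  have hsq' : ∑ v ∈ A, (excessDegree T v : ℝ) ^ 2 = (q - 2) ^ 2 + 1 := by
    exact_mod_cast hsq
  have hq' : (q : ℝ) = 2 * p - 4 := by rw [eq_sub_iff_add_eq]; exact_mod_cast hq
  have hp' : (5 : ℝ) ≤ p := by exact_mod_cast hp
  refine hbound.trans_lt ?_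
  rw [spectralMoment_six_bTree (by omega) hq2, hsq', hA, hB, Nat.cast_sub hq2, hq']
  push_cast
  nlinarith

theorem sLt_bTree_two_zero_of_forall_degree_ne (hp : 3 ≤ p) (hpq : p < q) (h : 2 * p ≤ q + 4)
    (hT : T.IsTree) (hAB : T.IsBipartiteWith (A : Set (Fin (p + q))) B) (hA : A.card = p)
    (hB : B.card = q) (hne : ∀ v ∈ A, T.degree v ≠ B.card) : SLt T (BTree p q 2 0) := by
  classical
  have : Nontrivial (Fin (p + q)) := nontrivial_fin_add (by omega) (by omega)
  have hBtree : (BTree p q 2 0).IsTree := isTree_bTree (by omega)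
  have hsumA := sum_sq_excessDegree_le_of_forall_degree_ne hT hAB (by omega) hne
  have hle := excessDegree_le_sub_two hAB hne
  have hsumB := sum_sq_excessDegree_le hT hAB.symm
  have hsum := sum_add_sum_of_isBipartiteWith hT hAB fun v => excessDegree T v ^ 2
  have hsumBTree := sum_sq_excessDegree_bTree (p := p) (q := q) (k := 2) (by omega) (by omega)
  simp only [Nat.reduceAdd, Nat.reducePow] at hsumBTree
  have harith := sq_add_sq_le_of_two_mul_le hp h
  rw [hB] at hsumA hle
  rw [hA] at hsumB
  have hsum_le : ∑ v, excessDegree T v ^ 2 ≤ ∑ v, excessDegree (BTree p q 2 0) v ^ 2 := by omega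
  rcases hsum_le.lt_or_eq with hlt | heq
  · exact sLt_of_sum_sq_excessDegree_lt hT hBtree (by rw [Fintype.card_fin]; omega) hlt
  · have htie := le_two_mul_of_sq_add_sq_le (p := p) (q := q) hp (by omega) (by omega)
    obtain ⟨v, hv, hdeg⟩ := exists_degree_eq_card_of_sq_le hT hAB.symm
      (Finset.card_pos.mp (by omega)) (by rw [hA]; omega)
    refine sLt_of_spectralMoment_six_lt hT hBtree (by rw [Fintype.card_fin]; omega) heq ?_
    exact spectralMoment_six_lt_bTree_two_zero (by omega) (by omega) hT hAB hA hB hv hdeg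
      hle (by omega)

end Comparison

/-- For `4 ≤ p < q`, `n = p + q` and `2p ≤ q + 4`, every tree
`T ∈ 𝒯_n^{p,q}` isomorphic to none of `B_{p,q}^{0,0}`, `B_{p,q}^{0,1}`,
`B_{p,q}^{2,0}` satisfies `T ≺_s B_{p,q}^{2,0}`: in this case `B_{p,q}^{2,0}` is the
unique third last tree in the S-order among `𝒯_n^{p,q}`. -/
theorem stmt_6 (p q : ℕ) (hp : 4 ≤ p) (hpq : p < q) (h : 2 * p ≤ q + 4)
    (T : SimpleGraph (Fin (p + q))) (hT : TreeBip p q T)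
    (h0 : ¬ Nonempty (T ≃g BTree p q 0 0))
    (h1 : ¬ Nonempty (T ≃g BTree p q 0 1))
    (h2 : ¬ Nonempty (T ≃g BTree p q 2 0)) :
    SLt T (BTree p q 2 0) := by
  classical
  obtain ⟨hTree, A, hA, hbip⟩ := hT
  have hAB : T.IsBipartiteWith (A : Set (Fin (p + q))) (Aᶜ : Finset (Fin (p + q))) :=
    { disjoint := Finset.disjoint_coe.mpr disjoint_compl_right
      mem_of_adj := fun x y hxy => by
        have := hbip hxy
        simp only [Finset.mem_coe, Finset.mem_compl]
        tauto }
  have hB : Aᶜ.card = q := by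
    rw [Finset.card_compl, hA, Fintype.card_fin, Nat.add_sub_cancel_left]
  by_cases hhub : ∃ u ∈ A, T.degree u = Aᶜ.card
  · obtain ⟨u, hu, hdeg⟩ := hhub
    exact sLt_bTree_two_zero_of_degree_eq_card hp (by omega) hTree hAB.symm hB hA hu hdeg h0 h1 h2
  · exact sLt_bTree_two_zero_of_forall_degree_ne (by omega) hpq h hTree hAB hA hB
      fun v hv hdeg => hhub ⟨v, hv, hdeg⟩
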